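/- Let F be a field, n a natural number, and A an n × n matrix over F. Then there exist n × n permutation matrices P and Q, an n × n lower triangular matrix L all of whose diagonal entries equal 1, and an n × n upper triangular matrix U, such that P * A * Q = L * U. -/

import Mathlib

/-!
Gaussian elimination. If the pivot of `A = [a, b; l a, l b + S]` stands in the top left corner, then
`A = [1, 0; l, 1] * [a, b; 0, S]`, and a pivoted factorization `L * U` of the Schur complement `S`,
with rows permuted by `σ` and columns by `τ`, lifts to the factorization
`[1, 0; l ∘ σ, L] * [a, b ∘ τ; 0, U]` of `A`, since fixing the first index and permuting the others
leaves the pivot in place. Over a division ring any nonzero entry can be moved to the corner, and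
it divides the rest of its column.
-/

/-- The matrix `[a, b; c, D]` obtained by bordering `D` with a first row and a first column;
block matrices `Matrix.fromBlocks` would be indexed by a sum type instead of `Fin (m + 1)`. -/
def borderedMatrix {R : Type*} {m n : ℕ} (a : R) (b : Fin n → R) (c : Fin m → R)
    (D : Matrix (Fin m) (Fin n) R) : Matrix (Fin (m + 1)) (Fin (n + 1)) R :=
  Matrix.of (Fin.cons (Fin.cons a b) fun i ↦ Fin.cons (c i) (D i))

/-- The existence of an LU decomposition with row and column pivoting: `A` is the product of a
unit lower triangular and an upper trapezoidal matrix after a permutation of its rows and columns.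
The pivoting is encoded by `Matrix.submatrix`, which composes better than products with
permutation matrices. -/
def HasPivotedLU {R : Type*} [Semiring R] {m n : ℕ} (A : Matrix (Fin m) (Fin n) R) : Prop :=
  ∃ (σ : Equiv.Perm (Fin m)) (τ : Equiv.Perm (Fin n))
    (L : Matrix (Fin m) (Fin m) R) (U : Matrix (Fin m) (Fin n) R),
    (∀ i j, i < j → L i j = 0) ∧
    (∀ i, L i i = 1) ∧
    (∀ (i : Fin m) (j : Fin n), (j : ℕ) < i → U i j = 0) ∧
    A.submatrix σ τ = L * U

section BorderedMatrix

variable {R : Type*} {m n : ℕ} (a : R) (b : Fin n → R) (c : Fin m → R)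
  (D : Matrix (Fin m) (Fin n) R)

@[simp]
theorem borderedMatrix_zero_zero : borderedMatrix a b c D 0 0 = a := rfl

@[simp]
theorem borderedMatrix_zero_succ (j : Fin n) : borderedMatrix a b c D 0 j.succ = b j := rfl

@[simp]
theorem borderedMatrix_succ_zero (i : Fin m) : borderedMatrix a b c D i.succ 0 = c i := rfl

@[simp]
theorem borderedMatrix_succ_succ (i : Fin m) (j : Fin n) :
    borderedMatrix a b c D i.succ j.succ = D i j := rfl

theorem borderedMatrix_eta (A : Matrix (Fin (m + 1)) (Fin (n + 1)) R) :
    borderedMatrix (A 0 0) (fun j ↦ A 0 j.succ) (fun i ↦ A i.succ 0)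
      (A.submatrix Fin.succ Fin.succ) = A := by
  ext i j
  cases i using Fin.cases <;> cases j using Fin.cases <;> simp

theorem borderedMatrix_submatrix_decomposeFin (σ : Equiv.Perm (Fin m)) (τ : Equiv.Perm (Fin n)) :
    (borderedMatrix a b c D).submatrix (Equiv.Perm.decomposeFin.symm (0, σ))
        (Equiv.Perm.decomposeFin.symm (0, τ)) =
      borderedMatrix a (b ∘ τ) (c ∘ σ) (D.submatrix σ τ) := by
  ext i j
  cases i using Fin.cases <;> cases j using Fin.cases <;> simp

theorem borderedMatrix_mul_borderedMatrix [Semiring R] {k : ℕ} (l : Fin m → R) (u : Fin n → R)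
    (L : Matrix (Fin m) (Fin k) R) (U : Matrix (Fin k) (Fin n) R) :
    borderedMatrix 1 0 l L * borderedMatrix a u 0 U =
      borderedMatrix a u (fun i ↦ l i * a) (Matrix.vecMulVec l u + L * U) := by
  ext i j
  cases i using Fin.cases <;> cases j using Fin.cases <;>
    simp [Matrix.mul_apply, Matrix.vecMulVec_apply, Fin.sum_univ_succ]

end BorderedMatrix

namespace HasPivotedLU

variable {R : Type*} [Semiring R] {m n : ℕ}

theorem zero : HasPivotedLU (0 : Matrix (Fin m) (Fin n) R) :=
  ⟨1, 1, 1, 0, fun _ _ h ↦ Matrix.one_apply_ne h.ne, Matrix.one_apply_eq, fun _ _ _ ↦ rfl, by simp⟩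

theorem of_submatrix {A : Matrix (Fin m) (Fin n) R} (e : Equiv.Perm (Fin m))
    (f : Equiv.Perm (Fin n)) (h : HasPivotedLU (A.submatrix e f)) : HasPivotedLU A := by
  obtain ⟨σ, τ, L, U, hL, hL_one, hU, hLU⟩ := h
  exact ⟨e * σ, f * τ, L, U, hL, hL_one, hU, hLU⟩

theorem bordered {S : Matrix (Fin m) (Fin n) R} (hS : HasPivotedLU S) (a : R)
    (b : Fin n → R) (l : Fin m → R) :
    HasPivotedLU (borderedMatrix a b (fun i ↦ l i * a) (Matrix.vecMulVec l b + S)) := by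
  obtain ⟨σ, τ, L, U, hL, hL_one, hU, hLU⟩ := hS
  refine ⟨Equiv.Perm.decomposeFin.symm (0, σ), Equiv.Perm.decomposeFin.symm (0, τ),
    borderedMatrix 1 0 (l ∘ σ) L, borderedMatrix a (b ∘ τ) 0 U, ?_, ?_, ?_, ?_⟩
  · intro i j hij
    cases i using Fin.cases <;> cases j using Fin.cases <;> simp_all
  · intro i
    cases i using Fin.cases <;> simp [hL_one]
  · intro i j hij
    cases i using Fin.cases <;> cases j using Fin.cases <;> simp_all
  · rw [borderedMatrix_submatrix_decomposeFin, borderedMatrix_mul_borderedMatrix, ← hLU]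
    rfl

end HasPivotedLU

section DivisionRing

variable {K : Type*} [DivisionRing K]

theorem hasPivotedLU_of_schurComplement {m n : ℕ} {A : Matrix (Fin (m + 1)) (Fin (n + 1)) K}
    (hA : A 0 0 ≠ 0)
    (hS : HasPivotedLU (A.submatrix Fin.succ Fin.succ -
      Matrix.vecMulVec (fun i ↦ A i.succ 0 / A 0 0) fun j ↦ A 0 j.succ)) :
    HasPivotedLU A := by
  have h := hS.bordered (A 0 0) (fun j ↦ A 0 j.succ) (fun i ↦ A i.succ 0 / A 0 0)
  simpa only [div_mul_cancel₀ _ hA, add_sub_cancel, borderedMatrix_eta] using h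

theorem hasPivotedLU {m n : ℕ} (A : Matrix (Fin m) (Fin n) K) : HasPivotedLU A := by
  induction m generalizing n with
  | zero => exact Subsingleton.elim 0 A ▸ .zero
  | succ m ih =>
    by_cases hA : A = 0
    · exact hA ▸ .zero
    obtain ⟨p, q, hpq⟩ : ∃ p q, A p q ≠ 0 := by
      contrapose! hA
      exact Matrix.ext hA
    cases n with
    | zero => exact q.elim0
    | succ n =>
      refine .of_submatrix (Equiv.swap 0 p) (Equiv.swap 0 q) ?_
      exact hasPivotedLU_of_schurComplement (by simpa using hpq) (ih _)

theorem exists_lu_decomposition_full_pivoting_general {m n : ℕ} (A : Matrix (Fin m) (Fin n) K) :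
    ∃ (σ : Equiv.Perm (Fin m)) (τ : Equiv.Perm (Fin n))
      (L : Matrix (Fin m) (Fin m) K) (U : Matrix (Fin m) (Fin n) K),
      (∀ i j, i < j → L i j = 0) ∧
      (∀ i, L i i = 1) ∧
      (∀ (i : Fin m) (j : Fin n), (j : ℕ) < i → U i j = 0) ∧
      σ.permMatrix K * A * τ.permMatrix K = L * U := by
  obtain ⟨σ, τ, L, U, hL, hL_one, hU, hLU⟩ := hasPivotedLU A
  -- Right multiplication by the matrix of `τ` permutes the columns by `τ⁻¹`.
  refine ⟨σ, τ⁻¹, L, U, hL, hL_one, hU, ?_⟩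
  rw [PEquiv.toMatrix_toPEquiv_mul, PEquiv.mul_toMatrix_toPEquiv, ← hLU]
  rfl

end DivisionRing

/-- **LU decomposition with full (row and column) pivoting.**  For any square matrix
`A` over a field `F`, there exist permutations `σ, τ` of the index set, a lower
triangular matrix `L` with unit diagonal, and an upper triangular matrix `U`, such
that `P * A * Q = L * U`, where `P` and `Q` are the permutation matrices of `σ` and
`τ`. -/
theorem exists_lu_decomposition_full_pivoting
    (F : Type*) [Field F] (n : ℕ) (A : Matrix (Fin n) (Fin n) F) :
    ∃ (σ τ : Equiv.Perm (Fin n)) (L U : Matrix (Fin n) (Fin n) F),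
      (∀ i j : Fin n, i < j → L i j = 0) ∧
      (∀ i : Fin n, L i i = 1) ∧
      (∀ i j : Fin n, j < i → U i j = 0) ∧
      (σ.permMatrix F) * A * (τ.permMatrix F) = L * U :=
  exists_lu_decomposition_full_pivoting_general A
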